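/- Let (A,S,Z,Φ) be a structured C*-algebra. Then (S,<) is a predomain: for all a,b,c ∈ S, if a < c and b < c then there exists d ∈ S with a < d, b < d and d < c. -/

import Mathlib

variable {A : Type*} [CStarAlgebra A] [PartialOrder A] [StarOrderedRing A]

/-- A structured C*-algebra `(A, S, Z, Φ)`. -/
structure StructuredCStar (A : Type*) [CStarAlgebra A] [PartialOrder A]
    [StarOrderedRing A] where
  /-- The expectation. -/
  Φ : A →ₗ[ℂ] A
  /-- The distinguished closed *-subsemigroup. -/
  S : Set A
  /-- The distinguished central C*-subalgebra. -/
  Z : Set A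
  Φ_idem : ∀ a : A, Φ (Φ a) = Φ a
  Φ_contractive : ∀ a : A, ‖Φ a‖ ≤ ‖a‖
  Φ_pos : ∀ a : A, 0 ≤ a → 0 ≤ Φ a
  Φ_mul_left : ∀ a b : A, Φ (Φ a * b) = Φ a * Φ b
  Φ_mul_right : ∀ a b : A, Φ (a * Φ b) = Φ a * Φ b
  S_isClosed : IsClosed S
  S_mul : ∀ a ∈ S, ∀ b ∈ S, a * b ∈ S
  S_star : ∀ a ∈ S, star a ∈ S
  S_smul : ∀ (c : ℂ), ∀ a ∈ S, c • a ∈ S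
  Z_sub_S : Z ⊆ S
  Z_isClosed : IsClosed Z
  Z_add : ∀ a ∈ Z, ∀ b ∈ Z, a + b ∈ Z
  Z_mul : ∀ a ∈ Z, ∀ b ∈ Z, a * b ∈ Z
  Z_star : ∀ a ∈ Z, star a ∈ Z
  Z_smul : ∀ (c : ℂ), ∀ a ∈ Z, c • a ∈ Z
  Z_fixed : ∀ z ∈ Z, Φ z = z
  Z_central : ∀ z ∈ Z, ∀ a : A, z * Φ a = Φ a * z
  PhiS_add : ∀ x ∈ Φ '' S, ∀ y ∈ Φ '' S, x + y ∈ Φ '' S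
  PhiS_ideal_right : ∀ x ∈ Φ '' S, ∀ a : A, x * Φ a ∈ Φ '' S
  PhiS_ideal_left : ∀ x ∈ Φ '' S, ∀ a : A, Φ a * x ∈ Φ '' S
  S_sq_sub_PhiS : ∀ s ∈ S, star s * s ∈ Φ '' S
  PhiS_sub_S : ∀ s ∈ S, Φ s ∈ S

namespace StructuredCStar

variable (𝒜 : StructuredCStar A)

/-- `a <_s b` : domination witnessed by `s`. -/
def domBy (a s b : A) : Prop :=
  a = a * s * b ∧ a = b * s * a ∧
  a * s ∈ 𝒜.Φ '' 𝒜.S ∧ s * a ∈ 𝒜.Φ '' 𝒜.S ∧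
  b * s ∈ 𝒜.Z ∧ s * b ∈ 𝒜.Z

/-- `a < b` : domination. -/
def dom (a b : A) : Prop := ∃ s ∈ 𝒜.S, 𝒜.domBy a s b

/-- `N ⊆ S` is binormal. -/
def Binormal (N : Set A) : Prop :=
  ∀ a ∈ 𝒜.S, ∀ b ∈ 𝒜.S, a * b ∈ N → ∀ z ∈ N, a * z * b ∈ N

/-- `B ⊆ S` is bistable. -/
def Bistable (B : Set A) : Prop :=
  ∀ a ∈ 𝒜.S, ∀ b ∈ 𝒜.S, a * b ∈ B → 𝒜.Φ a * b ∈ B ∧ a * 𝒜.Φ b ∈ B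

/-- `P ⊆ S` is productive. -/
def Productive (P : Set A) : Prop :=
  ∀ a ∈ 𝒜.S, 𝒜.Φ a ∈ closure ((a * ·) '' P) ∧ 𝒜.Φ a ∈ closure ((· * a) '' P)

end StructuredCStar

/-- A self-adjoint element `x` of a closed non-unital star subalgebra `T` admits `g, k ∈ T` such
that `g` is fixed by multiplication with `x * k`, while `1 - g` is a multiple of `1 - x`. -/
lemma IsSelfAdjoint.exists_mul_mul_eq_of_mem {B : Type*} [CStarAlgebra B]
    {T : NonUnitalStarSubalgebra ℂ B} (hT : IsClosed (T : Set B)) {x : B} (hx : IsSelfAdjoint x)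
    (hxT : x ∈ T) :
    ∃ g ∈ T, ∃ k ∈ T, ∃ m : B,
      g * (x * k) = g ∧ x * k * g = g ∧ 1 - g = (1 - x) * m ∧ 1 - g = m * (1 - x) := by
  let G : ℝ → ℝ := fun y => max 0 (2 * y - 1)
  let K : ℝ → ℝ := fun y => min (4 * y) (max y (1 / 2))⁻¹
  let M : ℝ → ℝ := fun y => (max (1 - y) (1 / 2))⁻¹
  have hG : Continuous G := by fun_prop
  have hK : Continuous K := by
    refine (continuous_const.mul continuous_id).min (Continuous.inv₀ (by fun_prop) fun y => ?_)
    exact (lt_of_lt_of_le (by norm_num) (le_max_right y (1 / 2))).ne'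
  have hM : Continuous M := by
    refine Continuous.inv₀ (by fun_prop) fun y => ?_
    exact (lt_of_lt_of_le (by norm_num) (le_max_right (1 - y) (1 / 2))).ne'
  have hG0 : G 0 = 0 := by simp [G]
  have hK0 : K 0 = 0 := by simp [K]
  have hGK (y : ℝ) : G y * (y * K y) = G y := by
    rcases le_total y (1 / 2) with hy | hy
    · have : G y = 0 := max_eq_left (by linarith)
      simp [this]
    · have hle : y⁻¹ ≤ 4 * y := by
        rw [inv_le_iff_one_le_mul₀ (by linarith)]
        nlinarith
      have : K y = y⁻¹ := by simp only [K, max_eq_left hy, min_eq_right hle]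
      rw [this, mul_inv_cancel₀ (by linarith), mul_one]
  have hGM (y : ℝ) : 1 - G y = (1 - y) * M y := by
    rcases le_total y (1 / 2) with hy | hy
    · have h₁ : G y = 0 := max_eq_left (by linarith)
      have h₂ : M y = (1 - y)⁻¹ := by simp only [M, max_eq_left (by linarith : 1 / 2 ≤ 1 - y)]
      rw [h₁, h₂, mul_inv_cancel₀ (by linarith), sub_zero]
    · have h₁ : G y = 2 * y - 1 := max_eq_right (by linarith)
      have h₂ : M y = (1 / 2)⁻¹ := by simp only [M, max_eq_right (by linarith : 1 - y ≤ 1 / 2)]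
      rw [h₁, h₂]
      ring
  have memT (f : ℝ → ℝ) (hf : Continuous f) (hf0 : f 0 = 0) : cfc f x ∈ T := by
    rw [← cfcₙ_eq_cfc hf.continuousOn hf0]
    have : IsClosed (T : Set B) := hT
    exact cfcₙ_mem f hxT
  have hxK : cfc (fun y => y * K y) x = x * cfc K x := by
    rw [cfc_mul (fun y => y) K x continuousOn_id hK.continuousOn, cfc_id' ℝ x]
  have hgk : cfc G x * (x * cfc K x) = cfc G x := by
    rw [← hxK, ← cfc_mul G (fun y => y * K y) x hG.continuousOn
      (continuous_id.mul hK).continuousOn]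
    simp only [hGK]
  have hgm : 1 - cfc G x = (1 - x) * cfc M x := by
    have h₁ : cfc (fun y => 1 - G y) x = 1 - cfc G x := by
      rw [cfc_sub (fun _ => 1) G x continuousOn_const hG.continuousOn, cfc_const_one ℝ x]
    have h₂ : cfc (fun y : ℝ => 1 - y) x = 1 - x := by
      rw [cfc_sub (fun _ => 1) (fun y => y) x continuousOn_const continuousOn_id,
        cfc_const_one ℝ x, cfc_id' ℝ x]
    rw [← h₁, ← h₂, ← cfc_mul (fun y => 1 - y) M x (by fun_prop) hM.continuousOn]
    simp only [hGM]
  refine ⟨cfc G x, memT G hG hG0, cfc K x, memT K hK hK0, cfc M x, hgk, ?_, hgm, ?_⟩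
  · rw [← hxK, (cfc_commute_cfc (fun y => y * K y) G x).eq, hxK, hgk]
  · have h : Commute (cfc M x) x := (Commute.refl x).cfc_real M
    rw [hgm, mul_sub, sub_mul, mul_one, one_mul, h.eq]

/-- If `a * w = a` for a normal element `w`, then `a * star w = a`. -/
lemma mul_star_eq_self_of_mul_eq_self {A : Type*} [CStarAlgebra A] {a w : A} (hw : IsStarNormal w)
    (h : a * w = a) : a * star w = a := by
  have h' : (a * star w - a) * star (a * star w - a) = 0 := by
    have : a * (star w * w) = a * star w := by rw [hw.star_comm_self.eq, ← mul_assoc, h]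
    simp only [star_sub, star_mul, star_star, sub_mul, mul_sub]
    have e₁ : a * star w * (w * star a) = a * star w * star a := by
      rw [← mul_assoc, mul_assoc a, this]
    have e₂ : a * (w * star a) = a * star a := by rw [← mul_assoc, h]
    rw [e₁, e₂]
    simp
  exact sub_eq_zero.mp (CStarRing.mul_star_self_eq_zero_iff _ |>.mp h')

/-- If `z * a = a` for a normal element `z`, then `star z * a = a`. -/
lemma star_mul_eq_self_of_mul_eq_self {A : Type*} [CStarAlgebra A] {a z : A} (hz : IsStarNormal z)
    (h : z * a = a) : star z * a = a := by
  have := mul_star_eq_self_of_mul_eq_self (a := star a) (w := star z) inferInstance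
    (by rw [← star_mul, h])
  simpa using congrArg star this

namespace StructuredCStar

variable (𝒜 : StructuredCStar A)

lemma Z_comm {z w : A} (hz : z ∈ 𝒜.Z) (hw : w ∈ 𝒜.Z) : z * w = w * z := by
  simpa only [𝒜.Z_fixed w hw] using 𝒜.Z_central z hz w

lemma Z_sub {z w : A} (hz : z ∈ 𝒜.Z) (hw : w ∈ 𝒜.Z) : z - w ∈ 𝒜.Z := by
  simpa [sub_eq_add_neg] using 𝒜.Z_add z hz _ (𝒜.Z_smul (-1) w hw)

lemma isStarNormal_of_mem_Z {z : A} (hz : z ∈ 𝒜.Z) : IsStarNormal z :=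
  ⟨𝒜.Z_comm (𝒜.Z_star z hz) hz⟩

lemma mul_mem_PhiS_of_mem_Z {x z : A} (hx : x ∈ 𝒜.Φ '' 𝒜.S) (hz : z ∈ 𝒜.Z) :
    x * z ∈ 𝒜.Φ '' 𝒜.S := by
  simpa only [𝒜.Z_fixed z hz] using 𝒜.PhiS_ideal_right x hx z

lemma mem_Z_mul_mem_PhiS {x z : A} (hz : z ∈ 𝒜.Z) (hx : x ∈ 𝒜.Φ '' 𝒜.S) :
    z * x ∈ 𝒜.Φ '' 𝒜.S := by
  simpa only [𝒜.Z_fixed z hz] using 𝒜.PhiS_ideal_left x hx z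

lemma Z_subset_PhiS : 𝒜.Z ⊆ 𝒜.Φ '' 𝒜.S :=
  fun z hz => ⟨z, 𝒜.Z_sub_S hz, 𝒜.Z_fixed z hz⟩

lemma PhiS_subset_S : 𝒜.Φ '' 𝒜.S ⊆ 𝒜.S := by
  rintro _ ⟨s, hs, rfl⟩
  exact 𝒜.PhiS_sub_S s hs

lemma PhiS_sub {x y : A} (hx : x ∈ 𝒜.Φ '' 𝒜.S) (hy : y ∈ 𝒜.Φ '' 𝒜.S) :
    x - y ∈ 𝒜.Φ '' 𝒜.S := by
  obtain ⟨s, hs, rfl⟩ := hy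
  rw [sub_eq_add_neg]
  refine 𝒜.PhiS_add _ hx _ ⟨(-1 : ℂ) • s, 𝒜.S_smul _ s hs, by simp⟩

lemma mul_star_self_mem_PhiS {s : A} (hs : s ∈ 𝒜.S) : s * star s ∈ 𝒜.Φ '' 𝒜.S := by
  simpa using 𝒜.S_sq_sub_PhiS _ (𝒜.S_star s hs)

/-- Pairs `(z, w)` of elements of `Z` such that `(z, w)` and `(star z, star w)` are intertwined
by `c`. -/
def intertwiners (h0 : (0 : A) ∈ 𝒜.Z) (c : A) : NonUnitalStarSubalgebra ℂ (A × A) where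
  carrier := {p | (p.1 ∈ 𝒜.Z ∧ p.2 ∈ 𝒜.Z) ∧ p.1 * c = c * p.2 ∧ star p.1 * c = c * star p.2}
  add_mem' := by
    rintro p q ⟨⟨hp₁, hp₂⟩, hp, hp'⟩ ⟨⟨hq₁, hq₂⟩, hq, hq'⟩
    refine ⟨⟨𝒜.Z_add _ hp₁ _ hq₁, 𝒜.Z_add _ hp₂ _ hq₂⟩, ?_, ?_⟩
    · simp only [Prod.fst_add, Prod.snd_add, add_mul, mul_add, hp, hq]
    · simp only [Prod.fst_add, Prod.snd_add, star_add, add_mul, mul_add, hp', hq']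
  zero_mem' := by simp [h0]
  mul_mem' := by
    rintro p q ⟨⟨hp₁, hp₂⟩, hp, hp'⟩ ⟨⟨hq₁, hq₂⟩, hq, hq'⟩
    refine ⟨⟨𝒜.Z_mul _ hp₁ _ hq₁, 𝒜.Z_mul _ hp₂ _ hq₂⟩, ?_, ?_⟩
    · simp only [Prod.fst_mul, Prod.snd_mul]
      rw [mul_assoc, hq, ← mul_assoc, hp, mul_assoc]
    · simp only [Prod.fst_mul, Prod.snd_mul, star_mul]
      rw [mul_assoc, hp', ← mul_assoc, hq', mul_assoc]
  smul_mem' := by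
    rintro r p ⟨⟨hp₁, hp₂⟩, hp, hp'⟩
    refine ⟨⟨𝒜.Z_smul _ _ hp₁, 𝒜.Z_smul _ _ hp₂⟩, ?_, ?_⟩
    · simp only [Prod.smul_fst, Prod.smul_snd, smul_mul_assoc, mul_smul_comm, hp]
    · simp only [Prod.smul_fst, Prod.smul_snd, star_smul, smul_mul_assoc, mul_smul_comm, hp']
  star_mem' := by
    rintro p ⟨⟨hp₁, hp₂⟩, hp, hp'⟩
    exact ⟨⟨𝒜.Z_star _ hp₁, 𝒜.Z_star _ hp₂⟩, by simpa using hp', by simpa using hp⟩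

lemma mem_intertwiners {h0 : (0 : A) ∈ 𝒜.Z} {c : A} {p : A × A} :
    p ∈ 𝒜.intertwiners h0 c ↔
      (p.1 ∈ 𝒜.Z ∧ p.2 ∈ 𝒜.Z) ∧ p.1 * c = c * p.2 ∧ star p.1 * c = c * star p.2 :=
  Iff.rfl

lemma isClosed_intertwiners (h0 : (0 : A) ∈ 𝒜.Z) (c : A) :
    IsClosed (𝒜.intertwiners h0 c : Set (A × A)) := by
  refine ((𝒜.Z_isClosed.preimage continuous_fst).inter
    (𝒜.Z_isClosed.preimage continuous_snd)).inter (IsClosed.inter ?_ ?_)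
  · exact isClosed_eq (by fun_prop) (by fun_prop)
  · exact isClosed_eq (by fun_prop) (by fun_prop)

lemma star_mul_intertwine {c s : A} (hcs : c * s ∈ 𝒜.Z) (hsc : s * c ∈ 𝒜.Z) :
    star (c * s) * c = c * star (s * c) := by
  have h₁ := 𝒜.isStarNormal_of_mem_Z hcs
  have h₂ := 𝒜.isStarNormal_of_mem_Z hsc
  have : SemiconjBy c (s * c) (c * s) := (mul_assoc c s c).symm
  exact (SemiconjBy.star_right h₂ h₁ this).eq.symm

lemma mul_star_mul_star_mul {c s : A} (hcs : c * s ∈ 𝒜.Z) (hsc : s * c ∈ 𝒜.Z) :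
    s * star s * star c * c = s * c * star (s * c) := by
  rw [mul_assoc s, ← star_mul, mul_assoc s, 𝒜.star_mul_intertwine hcs hsc, ← mul_assoc]

/-- A witness may be changed to any `r` for which `c * r` and `r * c` lie in `Z` and fix `a`. -/
lemma domBy.congr_witness {a s c r : A} (h : 𝒜.domBy a s c) (hcr : c * r ∈ 𝒜.Z)
    (hrc : r * c ∈ 𝒜.Z) (h₁ : a * (r * c) = a) (h₂ : c * r * a = a) : 𝒜.domBy a r c := by
  obtain ⟨ha₁, ha₂, has, hsa, -, -⟩ := h
  refine ⟨by rw [mul_assoc, h₁], h₂.symm, ?_, ?_, hcr, hrc⟩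
  · rw [ha₁, mul_assoc _ c r]
    exact 𝒜.mul_mem_PhiS_of_mem_Z has hcr
  · rw [ha₂, ← mul_assoc, ← mul_assoc, mul_assoc (r * c)]
    exact 𝒜.mem_Z_mul_mem_PhiS hrc hsa

/-- Two elements dominated by `c` are dominated by means of a common witness `r`, for which
`c * r` and `r * c` are self-adjoint. -/
lemma exists_common_witness {a b c : A} (hc : c ∈ 𝒜.S) (hac : 𝒜.dom a c) (hbc : 𝒜.dom b c) :
    ∃ r ∈ 𝒜.S, 𝒜.domBy a r c ∧ 𝒜.domBy b r c ∧
      IsSelfAdjoint (c * r) ∧ IsSelfAdjoint (r * c) := by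
  obtain ⟨s, hs, has⟩ := hac
  obtain ⟨t, ht, hbt⟩ := hbc
  obtain ⟨ha₁, ha₂, -, -, hcs, hsc⟩ := id has
  obtain ⟨hb₁, hb₂, -, -, hct, htc⟩ := id hbt
  rw [mul_assoc] at ha₁ hb₁
  set z₁ := c * s * star (c * s) with hz₁
  set w₁ := s * c * star (s * c) with hw₁
  set z₂ := c * t * star (c * t) with hz₂
  set w₂ := t * c * star (t * c) with hw₂
  have hz₁Z : z₁ ∈ 𝒜.Z := 𝒜.Z_mul _ hcs _ (𝒜.Z_star _ hcs)
  have hz₂Z : z₂ ∈ 𝒜.Z := 𝒜.Z_mul _ hct _ (𝒜.Z_star _ hct)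
  have hw₁Z : w₁ ∈ 𝒜.Z := 𝒜.Z_mul _ hsc _ (𝒜.Z_star _ hsc)
  have hw₂Z : w₂ ∈ 𝒜.Z := 𝒜.Z_mul _ htc _ (𝒜.Z_star _ htc)
  have haw : a * w₁ = a := by
    rw [hw₁, ← mul_assoc, ← ha₁,
      mul_star_eq_self_of_mul_eq_self (𝒜.isStarNormal_of_mem_Z hsc) ha₁.symm]
  have hbw : b * w₂ = b := by
    rw [hw₂, ← mul_assoc, ← hb₁,
      mul_star_eq_self_of_mul_eq_self (𝒜.isStarNormal_of_mem_Z htc) hb₁.symm]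
  have hza : z₁ * a = a := by
    rw [hz₁, mul_assoc, star_mul_eq_self_of_mul_eq_self (𝒜.isStarNormal_of_mem_Z hcs) ha₂.symm,
      ← ha₂]
  have hzb : z₂ * b = b := by
    rw [hz₂, mul_assoc, star_mul_eq_self_of_mul_eq_self (𝒜.isStarNormal_of_mem_Z hct) hb₂.symm,
      ← hb₂]
  set s' := s * star s * star c with hs'
  set t' := t * star t * star c with ht'
  have hcs' : c * s' = z₁ := by simp only [hs', hz₁, star_mul, mul_assoc]
  have hct' : c * t' = z₂ := by simp only [ht', hz₂, star_mul, mul_assoc]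
  have hs'c : s' * c = w₁ := 𝒜.mul_star_mul_star_mul hcs hsc
  have ht'c : t' * c = w₂ := 𝒜.mul_star_mul_star_mul hct htc
  have hcr : c * (s' + t' - w₁ * t') = z₁ + z₂ - z₁ * z₂ := by
    rw [mul_sub, mul_add, ← hs'c, hcs', hct']
    simp only [← mul_assoc, hcs']
    rw [mul_assoc, hct']
  have hrc : (s' + t' - w₁ * t') * c = w₁ + w₂ - w₁ * w₂ := by
    rw [sub_mul, add_mul, mul_assoc w₁, hs'c, ht'c]
  have hzZ : z₁ + z₂ - z₁ * z₂ ∈ 𝒜.Z :=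
    𝒜.Z_sub (𝒜.Z_add _ hz₁Z _ hz₂Z) (𝒜.Z_mul _ hz₁Z _ hz₂Z)
  have hwZ : w₁ + w₂ - w₁ * w₂ ∈ 𝒜.Z :=
    𝒜.Z_sub (𝒜.Z_add _ hw₁Z _ hw₂Z) (𝒜.Z_mul _ hw₁Z _ hw₂Z)
  have hzc : z₁ * z₂ = z₂ * z₁ := 𝒜.Z_comm hz₁Z hz₂Z
  have hwc : w₁ * w₂ = w₂ * w₁ := 𝒜.Z_comm hw₁Z hw₂Z
  have hz₁sa : IsSelfAdjoint z₁ := .mul_star_self _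
  have hz₂sa : IsSelfAdjoint z₂ := .mul_star_self _
  have hw₁sa : IsSelfAdjoint w₁ := .mul_star_self _
  have hw₂sa : IsSelfAdjoint w₂ := .mul_star_self _
  refine ⟨s' + t' - w₁ * t', ?_, has.congr_witness 𝒜 ?_ ?_ ?_ ?_,
    hbt.congr_witness 𝒜 ?_ ?_ ?_ ?_, ?_, ?_⟩
  · have : s' + t' - w₁ * t' = (s * star s + t * star t - w₁ * (t * star t)) * star c := by
      simp only [hs', ht', sub_mul, add_mul, mul_assoc]
    rw [this]
    exact 𝒜.S_mul _ (𝒜.PhiS_subset_S (𝒜.PhiS_sub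
      (𝒜.PhiS_add _ (𝒜.mul_star_self_mem_PhiS hs) _ (𝒜.mul_star_self_mem_PhiS ht))
      (𝒜.mem_Z_mul_mem_PhiS hw₁Z (𝒜.mul_star_self_mem_PhiS ht)))) _ (𝒜.S_star c hc)
  · rwa [hcr]
  · rwa [hrc]
  · rw [hrc, mul_sub, mul_add, ← mul_assoc a w₁ w₂, haw, add_sub_cancel_right]
  · rw [hcr, hzc, sub_mul, add_mul, mul_assoc z₂, hza, add_sub_cancel_right]
  · rwa [hcr]
  · rwa [hrc]
  · rw [hrc, hwc, mul_sub, mul_add, ← mul_assoc b w₂ w₁, hbw, add_sub_cancel_left]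
  · rw [hcr, sub_mul, add_mul, mul_assoc z₁, hzb, add_sub_cancel_left]
  · rw [hcr]
    exact (hz₁sa.add hz₂sa).sub ((hz₁sa.commute_iff hz₂sa).mp hzc)
  · rw [hrc]
    exact (hw₁sa.add hw₂sa).sub ((hw₁sa.commute_iff hw₂sa).mp hwc)

end StructuredCStar

/-- `(S, <)` is a predomain: if `a, b < c` then there is `d` with
`a, b < d < c`. -/
theorem StructuredCStar.predomain (𝒜 : StructuredCStar A) {a b c : A}
    (ha : a ∈ 𝒜.S) (hb : b ∈ 𝒜.S) (hc : c ∈ 𝒜.S)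
    (hac : 𝒜.dom a c) (hbc : 𝒜.dom b c) :
    ∃ d ∈ 𝒜.S, 𝒜.dom a d ∧ 𝒜.dom b d ∧ 𝒜.dom d c := by
  obtain ⟨r, hr, har, hbr, hz, hw⟩ := 𝒜.exists_common_witness hc hac hbc
  have hcr : c * r ∈ 𝒜.Z := har.2.2.2.2.1
  have hrc : r * c ∈ 𝒜.Z := har.2.2.2.2.2
  have h0 : (0 : A) ∈ 𝒜.Z := by simpa using 𝒜.Z_smul 0 _ hcr
  have hx : IsSelfAdjoint ((c * r, r * c) : A × A) := Prod.ext hz.star_eq hw.star_eq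
  have hxT : ((c * r, r * c) : A × A) ∈ 𝒜.intertwiners h0 c := by
    refine 𝒜.mem_intertwiners.mpr ⟨⟨hcr, hrc⟩, mul_assoc c r c, ?_⟩
    exact 𝒜.star_mul_intertwine hcr hrc
  obtain ⟨⟨g, g'⟩, hg, ⟨k, k'⟩, hk, ⟨m, m'⟩, h₁, h₂, h₃, h₄⟩ :=
    hx.exists_mul_mul_eq_of_mem (𝒜.isClosed_intertwiners h0 c) hxT
  obtain ⟨⟨hgZ, hgZ'⟩, hgc, -⟩ := 𝒜.mem_intertwiners.mp hg
  obtain ⟨⟨hkZ, hkZ'⟩, hkc, -⟩ := 𝒜.mem_intertwiners.mp hk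
  simp only at hgZ hgZ' hgc hkZ hkZ' hkc
  have hgk : g * (c * r * k) = g := congrArg Prod.fst h₁
  have hgk' : g' * (r * c * k') = g' := congrArg Prod.snd h₁
  have hkg : c * r * k * g = g := congrArg Prod.fst h₂
  have hkg' : r * c * k' * g' = g' := congrArg Prod.snd h₂
  have hm : 1 - g = m * (1 - c * r) := congrArg Prod.fst h₄
  have hm' : 1 - g' = (1 - r * c) * m' := congrArg Prod.snd h₃
  have hdr : g * c * r = g * (c * r) := mul_assoc g c r
  have hrd : r * (g * c) = r * c * g' := by rw [hgc, mul_assoc]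
  have hrkc : r * k * c = r * c * k' := by rw [mul_assoc, hkc, mul_assoc]
  have below {e : A} (he : 𝒜.domBy e r c) : 𝒜.dom e (g * c) := by
    obtain ⟨he₁, he₂, her, hre, -, -⟩ := he
    have hge : g * e = e := by
      have : (1 - g) * e = 0 := by rw [hm, mul_assoc, sub_mul, one_mul, ← he₂, sub_self, mul_zero]
      rw [sub_mul, one_mul] at this
      exact (sub_eq_zero.mp this).symm
    have heg : e * g' = e := by
      have : e * (1 - g') = 0 := by
        rw [hm', ← mul_assoc, mul_sub, mul_one, ← mul_assoc, ← he₁, sub_self, zero_mul]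
      rw [mul_sub, mul_one] at this
      exact (sub_eq_zero.mp this).symm
    refine ⟨r, hr, ?_, ?_, her, hre, ?_, ?_⟩
    · rw [mul_assoc, hrd, ← mul_assoc, ← mul_assoc, ← he₁, heg]
    · rw [hdr, mul_assoc, ← he₂, hge]
    · rw [hdr]
      exact 𝒜.Z_mul _ hgZ _ hcr
    · rw [hrd]
      exact 𝒜.Z_mul _ hrc _ hgZ'
  have hckr : c * (r * k) = c * r * k := (mul_assoc c r k).symm
  refine ⟨g * c, 𝒜.S_mul _ (𝒜.Z_sub_S hgZ) _ hc, below har, below hbr, r * k,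
    𝒜.S_mul _ hr _ (𝒜.Z_sub_S hkZ), ?_, ?_, ?_, ?_, ?_, ?_⟩
  · rw [mul_assoc g, hckr, hgk]
  · rw [hckr, ← mul_assoc, hkg]
  · rw [mul_assoc g, hckr, hgk]
    exact 𝒜.Z_subset_PhiS hgZ
  · rw [hgc, ← mul_assoc, hrkc, hkg']
    exact 𝒜.Z_subset_PhiS hgZ'
  · rw [hckr]
    exact 𝒜.Z_mul _ hcr _ hkZ
  · rw [hrkc]
    exact 𝒜.Z_mul _ hrc _ hkZ'
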